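/- Let E = E(2,M,p) be a planar fractal percolation with integer M ≥ 2 and p ∈ (0,1). For every u > 1 there exists r = r(u) > 0 (one may take r = √2·(u−1)²·p²) such that for every n ≥ 1, every segment ℓ ∈ 𝔏 and every real R with 0 < R < |ℓ| (the length of ℓ), the conditional probability satisfies ℙ( L_n(ℓ) > p·u·L_{n−1}(ℓ) | L_{n−1}(ℓ) ≥ R ) < exp( −r·M^{n−1}·R ). -/

import Mathlib

open MeasureTheory Set ENNReal ProbabilityTheory Real

noncomputable section

/-- The alphabet indexing the `M^d` subcubes of a cube in `[0,1]^d`. -/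
abbrev Alpha (d M : ℕ) : Type := Fin d → Fin M

/-- Finite nonempty words over the alphabet; they index `M`-adic cubes. -/
abbrev Word (d M : ℕ) : Type := {w : List (Alpha d M) // w ≠ []}

/-- The sample space: `{0,1}`-labelings of all finite nonempty words. -/
abbrev PercSpace (d M : ℕ) : Type := Word d M → Bool

/-- `P` is the product measure making the labels i.i.d. Bernoulli(`p`). -/
def IsBernoulliPerc (d M : ℕ) (p : ℝ) (P : Measure (PercSpace d M)) : Prop :=
  IsProbabilityMeasure P ∧
    ∀ (S : Finset (Word d M)) (b : Word d M → Bool),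
      P {ω | ∀ w ∈ S, ω w = b w} =
        ∏ w ∈ S, if b w then ENNReal.ofReal p else ENNReal.ofReal (1 - p)

/-- A level-`w.length` cube is retained iff its word and every nonempty prefix
of its word carry label 1. -/
def Retained (d M : ℕ) (ω : PercSpace d M) (w : List (Alpha d M)) : Prop :=
  ∀ (u : List (Alpha d M)) (hu : u ≠ []), u <+: w → ω ⟨u, hu⟩ = true

/-- The `i`-th coordinate of the lower-left corner of the cube indexed by `w`. -/
def wordBase (d M : ℕ) (w : List (Alpha d M)) (i : Fin d) : ℝ :=
  ∑ j : Fin w.length, ((w.get j) i : ℝ) * (M : ℝ) ^ (-(j : ℤ) - 1)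

/-- The closed `M`-adic cube of level `w.length` indexed by the word `w`. -/
def wordCube (d M : ℕ) (w : List (Alpha d M)) : Set (EuclideanSpace ℝ (Fin d)) :=
  {x | ∀ i, wordBase d M w i ≤ x i ∧ x i ≤ wordBase d M w i + (M : ℝ) ^ (-(w.length : ℤ))}

/-- `E_n`, the union of the retained level-`n` cubes. -/
def approx (d M : ℕ) (ω : PercSpace d M) (n : ℕ) : Set (EuclideanSpace ℝ (Fin d)) :=
  ⋃ w ∈ {w : List (Alpha d M) | w.length = n ∧ Retained d M ω w}, wordCube d M w

/-- The fractal percolation set `E = ⋂_{n ≥ 1} E_n`. -/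
def percLimit (d M : ℕ) (ω : PercSpace d M) : Set (EuclideanSpace ℝ (Fin d)) :=
  ⋂ n ∈ {n : ℕ | 1 ≤ n}, approx d M ω n

/-- The segment cut out of `[0,1]²` by the line through `z` with direction `v`. -/
def lineSeg (z v : EuclideanSpace ℝ (Fin 2)) : Set (EuclideanSpace ℝ (Fin 2)) :=
  {x | (∃ t : ℝ, x = z + t • v) ∧ ∀ i, 0 ≤ x i ∧ x i ≤ 1}

/-- The line through `z` with direction `v` meets the open unit square. -/
def MeetsOpenSquare (z v : EuclideanSpace ℝ (Fin 2)) : Prop :=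
  ∃ t : ℝ, ∀ i, 0 < (z + t • v) i ∧ (z + t • v) i < 1

/-- The line with direction `v` makes an acute angle `> θ` with both coordinate
axes (the angle with the `x`-axis has sine `|v 1|/‖v‖`, the one with the
`y`-axis has sine `|v 0|/‖v‖`). -/
def AngleSep (θ : ℝ) (v : EuclideanSpace ℝ (Fin 2)) : Prop :=
  Real.sin θ * ‖v‖ < |v 1| ∧ Real.sin θ * ‖v‖ < |v 0|

lemma wordBase_cons (d M : ℕ) (hM : 0 < M) (c : Alpha d M) (w : List (Alpha d M)) (i : Fin d) :
    wordBase d M (c :: w) i = ((c i : ℕ) + wordBase d M w i) / M := by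
  have hM' : (M : ℝ) ≠ 0 := by positivity
  unfold wordBase
  rw [add_div, Finset.sum_div]
  refine (Fin.sum_univ_succ (n := w.length) _).trans ?_
  congr 1
  · change ((c i : ℕ) : ℝ) * (M : ℝ) ^ (-((0 : ℕ) : ℤ) - 1) = _
    simp [zpow_neg, div_eq_mul_inv]
  · apply Finset.sum_congr rfl
    intro j _
    have : (-(((j.succ : Fin (w.length + 1)) : ℕ) : ℤ) - 1) = (-((j : ℕ) : ℤ) - 1) - 1 := by
      simp; ring
    change (((w.get j) i : ℕ) : ℝ) * _ = _
    rw [this, zpow_sub_one₀ hM', mul_div_assoc, div_eq_mul_inv]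

lemma mem_wordCube_nil (d M : ℕ) (x : EuclideanSpace ℝ (Fin d)) :
    x ∈ wordCube d M [] ↔ ∀ i, 0 ≤ x i ∧ x i ≤ 1 := by
  simp [wordCube, wordBase]

lemma mem_wordCube_cons (d M : ℕ) (hM : 0 < M) (c : Alpha d M) (w : List (Alpha d M))
    (x : EuclideanSpace ℝ (Fin d)) :
    x ∈ wordCube d M (c :: w) ↔
      (WithLp.toLp 2 (fun i => (M : ℝ) * x i - (c i : ℕ))) ∈ wordCube d M w := by
  have hM' : (0 : ℝ) < M := by positivity
  simp only [wordCube, Set.mem_ofPred_eq, wordBase_cons d M hM, List.length_cons]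
  apply forall_congr'
  intro i
  have : (M : ℝ) ^ (-((w.length + 1 : ℕ) : ℤ)) = (M : ℝ) ^ (-(w.length : ℤ)) / M := by
    rw [show (-((w.length + 1 : ℕ) : ℤ)) = -(w.length : ℤ) - 1 by push_cast; ring,
      zpow_sub_one₀ hM'.ne', div_eq_mul_inv]
  rw [this, ← add_div, div_le_iff₀ hM', le_div_iff₀ hM']
  constructor <;> rintro ⟨h1, h2⟩ <;> constructor <;> linarith

lemma wordCube_subset_unit (d M : ℕ) (hM : 0 < M) (w : List (Alpha d M)) :
    ∀ x ∈ wordCube d M w, ∀ i, 0 ≤ x i ∧ x i ≤ 1 := by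
  have hM' : (0 : ℝ) < M := by positivity
  induction w with
  | nil => intro x hx; exact (mem_wordCube_nil d M x).1 hx
  | cons c w ih =>
    intro x hx i
    rw [mem_wordCube_cons d M hM] at hx
    have h := ih _ hx i
    have hc : ((c i : ℕ) : ℝ) + 1 ≤ M := by exact_mod_cast (c i).2
    have hc0 : (0 : ℝ) ≤ ((c i : ℕ) : ℝ) := by positivity
    simp only at h
    constructor
    · by_contra hneg
      push Not at hneg
      nlinarith
    · by_contra hneg
      push Not at hneg
      nlinarith

lemma wordCube_inter (d M : ℕ) (hM : 0 < M) : ∀ w w' : List (Alpha d M), w.length = w'.length →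
    w ≠ w' → ∃ (i : Fin d) (y : ℝ), ∀ x ∈ wordCube d M w ∩ wordCube d M w', x i = y := by
  have hM' : (0 : ℝ) < M := by positivity
  have key : ∀ (c c' : Alpha d M) (w w' : List (Alpha d M)) (i : Fin d), c i < c' i →
      ∀ x ∈ wordCube d M (c :: w) ∩ wordCube d M (c' :: w'), x i = ((c i : ℕ) + 1) / M := by
    intro c c' w w' i hlt x hx
    have h1 := wordCube_subset_unit d M hM _ _ ((mem_wordCube_cons d M hM _ _ _).1 hx.1) i
    have h2 := wordCube_subset_unit d M hM _ _ ((mem_wordCube_cons d M hM _ _ _).1 hx.2) i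
    have hc : ((c i : ℕ) : ℝ) + 1 ≤ (c' i : ℕ) := by exact_mod_cast hlt
    simp only at h1 h2
    rw [eq_div_iff hM'.ne']
    linarith [h1.2, h2.1]
  intro w
  induction w with
  | nil => intro w' h hne; exact absurd (List.length_eq_zero_iff.1 h.symm).symm hne
  | cons c w ih =>
    intro w' h hne
    cases w' with
    | nil => simp at h
    | cons c' w' =>
      by_cases hc : c = c'
      · subst hc
        obtain ⟨i, y, hy⟩ := ih w' (by simpa using h) (by simpa using hne)
        refine ⟨i, (y + (c i : ℕ)) / M, fun x hx => ?_⟩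
        have := hy _ ⟨(mem_wordCube_cons d M hM _ _ _).1 hx.1, (mem_wordCube_cons d M hM _ _ _).1 hx.2⟩
        simp only at this
        rw [eq_div_iff hM'.ne']
        linarith
      · obtain ⟨i, hi⟩ := Function.ne_iff.1 hc
        rcases lt_or_gt_of_ne hi with hlt | hlt
        · exact ⟨i, _, key c c' w w' i hlt⟩
        · exact ⟨i, _, fun x hx => key c' c w' w i hlt x hx.symm⟩

lemma wordCube_concat (d M : ℕ) (hM : 0 < M) (w : List (Alpha d M)) :
    ∀ x, x ∈ wordCube d M w ↔ ∃ c, x ∈ wordCube d M (w ++ [c]) := by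
  have hM' : (0 : ℝ) < M := by positivity
  induction w with
  | nil =>
    intro x
    constructor
    · intro hx
      rw [mem_wordCube_nil] at hx
      have : ∀ i, ∃ c : Fin M, 0 ≤ (M : ℝ) * x i - (c : ℕ) ∧ (M : ℝ) * x i - (c : ℕ) ≤ 1 := by
        intro i
        by_cases h1 : x i = 1
        · refine ⟨⟨M - 1, by omega⟩, ?_⟩
          simp only [h1]
          rw [Nat.cast_sub (by omega)]
          constructor <;> push_cast <;> linarith
        · have hlt : x i < 1 := lt_of_le_of_ne (hx i).2 h1
          have hnn : 0 ≤ (M : ℝ) * x i := mul_nonneg hM'.le (hx i).1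
          refine ⟨⟨⌊(M : ℝ) * x i⌋₊, ?_⟩, ?_, ?_⟩
          · rw [Nat.floor_lt hnn]; nlinarith
          · simpa using Nat.floor_le hnn
          · have := Nat.lt_floor_add_one ((M : ℝ) * x i)
            simp only
            linarith
      choose c hc using this
      refine ⟨c, ?_⟩
      rw [List.nil_append, mem_wordCube_cons d M hM, mem_wordCube_nil]
      exact hc
    · rintro ⟨c, hc⟩
      rw [mem_wordCube_nil]
      exact wordCube_subset_unit d M hM _ _ hc
  | cons c0 w ih =>
    intro x
    simp only [List.cons_append, mem_wordCube_cons d M hM]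
    exact ih _

lemma isClosed_wordCube (d M : ℕ) (w : List (Alpha d M)) : IsClosed (wordCube d M w) := by
  unfold wordCube
  simp only [Set.ofPred_forall]
  refine isClosed_iInter fun i => ?_
  rw [Set.ofPred_and]
  exact (isClosed_le (by fun_prop) (by fun_prop)).inter (isClosed_le (by fun_prop) (by fun_prop))

lemma isClosed_lineSeg (z v : EuclideanSpace ℝ (Fin 2)) (hv : v 0 ≠ 0) :
    IsClosed (lineSeg z v) := by
  have : lineSeg z v = {x | (x 1 - z 1) * v 0 = (x 0 - z 0) * v 1} ∩
      ⋂ i, ({x | 0 ≤ x i} ∩ {x | x i ≤ 1}) := by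
    ext x
    simp only [lineSeg, Set.mem_ofPred_eq, Set.mem_inter_iff, Set.mem_iInter]
    refine and_congr_left fun _ => ?_
    constructor
    · rintro ⟨t, rfl⟩
      simp; ring
    · intro h
      refine ⟨(x 0 - z 0) / v 0, ?_⟩
      ext i
      fin_cases i
      · simp; field_simp; ring
      · simp; field_simp; linarith
  rw [this]
  refine (isClosed_eq (by fun_prop) (by fun_prop)).inter (isClosed_iInter fun i => ?_)
  exact (isClosed_le (by fun_prop) (by fun_prop)).inter (isClosed_le (by fun_prop) (by fun_prop))

lemma slice_le (M : ℕ) (hM : 0 < M) (z v : EuclideanSpace ℝ (Fin 2)) (hv0 : v 0 ≠ 0)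
    (hv1 : v 1 ≠ 0) (w : List (Alpha 2 M)) :
    μH[1] (wordCube 2 M w ∩ lineSeg z v) ≤
      ENNReal.ofReal (2 * (M : ℝ) ^ (-(w.length : ℤ))) := by
  have hM' : (0 : ℝ) < M := by positivity
  set h := (M : ℝ) ^ (-(w.length : ℤ)) with hh
  have hpos : 0 < h := by positivity
  have hnorm : ‖v‖ ≤ |v 0| + |v 1| := by
    rw [EuclideanSpace.norm_eq, Real.sqrt_le_left (by positivity)]
    simp only [Fin.sum_univ_two, Real.norm_eq_abs]
    nlinarith [abs_nonneg (v 0), abs_nonneg (v 1)]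
  obtain ⟨i, hi0, hi⟩ : ∃ i, v i ≠ 0 ∧ ‖v‖ ≤ 2 * |v i| := by
    rcases le_total |v 0| |v 1| with hl | hl
    · exact ⟨1, hv1, by linarith⟩
    · exact ⟨0, hv0, by linarith⟩
  set b := wordBase 2 M w i with hb
  have hsub : wordCube 2 M w ∩ lineSeg z v ⊆
      AffineMap.lineMap z (z + v) '' (Set.uIcc ((b - z i) / v i) ((b + h - z i) / v i)) := by
    rintro x ⟨hx, ⟨t, rfl⟩, -⟩
    refine ⟨t, ?_, by simp [AffineMap.lineMap_apply, add_comm]⟩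
    have h1 := hx i
    simp only [PiLp.add_apply, PiLp.smul_apply, smul_eq_mul] at h1
    rw [Set.mem_uIcc]
    rcases lt_or_gt_of_ne hi0 with hn | hp
    · right
      rw [div_le_iff_of_neg hn, le_div_iff_of_neg hn]
      constructor <;> linarith [h1.1, h1.2]
    · left
      rw [div_le_iff₀ hp, le_div_iff₀ hp]
      constructor <;> linarith [h1.1, h1.2]
  refine (measure_mono hsub).trans ?_
  rw [hausdorffMeasure_lineMap_image, hausdorffMeasure_real, Real.volume_interval]
  have e1 : (b + h - z i) / v i - (b - z i) / v i = h / v i := by field_simp; ring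
  have e2 : (nndist z (z + v) : ℝ) = ‖v‖ := by simp [dist_eq_norm]
  rw [e1, abs_div, abs_of_pos hpos, ENNReal.smul_def, smul_eq_mul, ← ENNReal.ofReal_coe_nnreal, e2,
    ← ENNReal.ofReal_mul (norm_nonneg _)]
  apply ENNReal.ofReal_le_ofReal
  have : 0 < |v i| := abs_pos.2 hi0
  rw [← mul_div_assoc, div_le_iff₀ this]
  nlinarith

lemma slice_add (M : ℕ) (hM : 0 < M) (z v : EuclideanSpace ℝ (Fin 2)) (hv0 : v 0 ≠ 0)
    (hv1 : v 1 ≠ 0) (n : ℕ) (T : Finset (Word 2 M)) (hT : ∀ w ∈ T, w.1.length = n) :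
    μH[1] ((⋃ w ∈ T, wordCube 2 M w.1) ∩ lineSeg z v) =
      ENNReal.ofReal (∑ w ∈ T, (μH[1] (wordCube 2 M w.1 ∩ lineSeg z v)).toReal) := by
  have hv : ∀ i, v i ≠ 0 := by intro i; fin_cases i <;> assumption
  rw [Set.iUnion₂_inter, measure_biUnion_finset₀,
    ENNReal.ofReal_sum_of_nonneg (fun _ _ => ENNReal.toReal_nonneg)]
  · refine Finset.sum_congr rfl fun w _ => ?_
    rw [ENNReal.ofReal_toReal]
    exact ((slice_le M hM z v hv0 hv1 w.1).trans_lt ENNReal.ofReal_lt_top).ne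
  · intro w hw w' hw' hne
    obtain ⟨i, y, hy⟩ := wordCube_inter 2 M hM w.1 w'.1 ((hT w hw).trans (hT w' hw').symm)
      (fun h => hne (Subtype.ext h))
    have := Measure.nullSingletonClass_hausdorff (EuclideanSpace ℝ (Fin 2)) one_pos
    refine Set.Subsingleton.measure_zero ?_ _
    rintro x ⟨⟨hx1, ⟨t, rfl⟩, -⟩, hx2, -⟩ x' ⟨⟨hx1', ⟨t', rfl⟩, -⟩, hx2', -⟩
    have h1 := hy _ ⟨hx1, hx2⟩
    have h2 := hy _ ⟨hx1', hx2'⟩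
    simp only [PiLp.add_apply, PiLp.smul_apply, smul_eq_mul] at h1 h2
    have : t = t' := mul_right_cancel₀ (hv i) (by linarith)
    rw [this]
  · intro w _
    exact ((isClosed_wordCube _ _ _).inter (isClosed_lineSeg z v hv0)).measurableSet.nullMeasurableSet

lemma Retained_concat (d M : ℕ) (ω : PercSpace d M) (w : List (Alpha d M)) (c : Alpha d M) :
    Retained d M ω (w ++ [c]) ↔ Retained d M ω w ∧ ω ⟨w ++ [c], by simp⟩ = true := by
  unfold Retained
  constructor
  · intro h
    exact ⟨fun u hu hp => h u hu (hp.trans (List.prefix_append _ _)), h _ _ (List.prefix_refl _)⟩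
  · rintro ⟨h1, h2⟩ u hu hp
    rcases List.prefix_concat_iff.1 hp with rfl | hp
    · exact h2
    · exact h1 u hu hp

lemma Retained_dropLast (d M : ℕ) (ω : PercSpace d M) (w : Word d M) :
    Retained d M ω w.1 ↔ Retained d M ω w.1.dropLast ∧ ω w = true := by
  obtain ⟨w, hw⟩ := w
  have := Retained_concat d M ω w.dropLast (w.getLast hw)
  simp only [List.dropLast_append_getLast] at this
  exact this

/-- The words of length `n`. -/
def lev (d M n : ℕ) : Finset (Word d M) :=
  Set.Finite.toFinset (s := {w : Word d M | w.1.length = n})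
    ((List.finite_length_eq (Alpha d M) n).preimage Subtype.val_injective.injOn)

/-- The words of length less than `n`. -/
def past (d M n : ℕ) : Finset (Word d M) :=
  Set.Finite.toFinset (s := {w : Word d M | w.1.length < n})
    ((List.finite_length_lt (Alpha d M) n).preimage Subtype.val_injective.injOn)

lemma mem_lev (d M n : ℕ) (w : Word d M) : w ∈ lev d M n ↔ w.1.length = n := by simp [lev]
lemma mem_past (d M n : ℕ) (w : Word d M) : w ∈ past d M n ↔ w.1.length < n := by simp [past]

open Classical in
/-- Words of length `n` whose parent is retained. -/
def selW (d M n : ℕ) (ω : PercSpace d M) : Finset (Word d M) :=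
  (lev d M n).filter (fun w => Retained d M ω w.1.dropLast)

lemma approx_eq (d M n : ℕ) (hn : 1 ≤ n) (ω : PercSpace d M) :
    approx d M ω n = ⋃ w ∈ (selW d M n ω).filter (fun w => ω w = true), wordCube d M w.1 := by
  ext x
  simp only [approx, Set.mem_iUnion, Set.mem_ofPred_eq, exists_prop, Finset.mem_filter, selW, mem_lev]
  constructor
  · rintro ⟨w, ⟨h1, h2⟩, hx⟩
    have hw : w ≠ [] := by rintro rfl; simp at h1; omega
    have := (Retained_dropLast d M ω ⟨w, hw⟩).1 h2
    exact ⟨⟨w, hw⟩, ⟨⟨h1, this.1⟩, this.2⟩, hx⟩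
  · rintro ⟨w, ⟨⟨h1, h2⟩, h3⟩, hx⟩
    exact ⟨w.1, ⟨h1, (Retained_dropLast d M ω w).2 ⟨h2, h3⟩⟩, hx⟩

lemma approx_pred_eq (d M n : ℕ) (hM : 0 < M) (hn : 1 ≤ n) (ω : PercSpace d M) :
    approx d M ω (n - 1) = ⋃ w ∈ selW d M n ω, wordCube d M w.1 := by
  ext x
  simp only [approx, Set.mem_iUnion, Set.mem_ofPred_eq, exists_prop, Finset.mem_filter, selW, mem_lev]
  constructor
  · rintro ⟨w, ⟨h1, h2⟩, hx⟩
    obtain ⟨c, hc⟩ := (wordCube_concat d M hM w x).1 hx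
    refine ⟨⟨w ++ [c], by simp⟩, ⟨by simp; omega, by simpa using h2⟩, hc⟩
  · rintro ⟨⟨w, hw⟩, ⟨h1, h2⟩, hx⟩
    refine ⟨w.dropLast, ⟨by simp at h1 ⊢; omega, h2⟩, ?_⟩
    rw [wordCube_concat d M hM]
    exact ⟨w.getLast hw, by rw [List.dropLast_append_getLast]; exact hx⟩

lemma perc_map_restrict (d M : ℕ) (p : ℝ) (hp0 : 0 < p) (hp1 : p < 1)
    (P : Measure (PercSpace d M)) (hP : IsBernoulliPerc d M p P) :
    (∀ w, P {ω | ω w = true} = ENNReal.ofReal p) ∧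
    iIndepFun (fun (w : Word d M) (ω : PercSpace d M) => ω w) P := by
  classical
  obtain ⟨hprob, hP⟩ := hP
  have hone : ∀ (w : Word d M) (c : Bool), P {ω | ω w = c} =
      if c then ENNReal.ofReal p else ENNReal.ofReal (1 - p) := by
    intro w c
    have := hP {w} (fun _ => c)
    simpa using this
  refine ⟨fun w => by simpa using hone w true, ?_⟩
  rw [iIndepFun_iff_finset]
  intro S
  have hmeas : ∀ i : S, Measurable
      (S.restrict (fun (w : Word d M) (ω : PercSpace d M) => ω w) i) :=
    fun i => measurable_pi_apply _
  rw [iIndepFun_iff_map_fun_eq_pi_map (fun i => (hmeas i).aemeasurable)]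
  have : ∀ i : S, IsProbabilityMeasure (P.map (S.restrict (fun (w : Word d M) (ω : PercSpace d M) => ω w) i)) :=
    fun i => Measure.isProbabilityMeasure_map (measurable_pi_apply _).aemeasurable
  refine Measure.ext_of_singleton fun b => ?_
  rw [Measure.pi_singleton, Measure.map_apply (by
    refine measurable_pi_iff.2 fun i => ?_
    exact measurable_pi_apply _) (measurableSet_singleton _)]
  have h1 := hP S (fun w => if h : w ∈ S then b ⟨w, h⟩ else true)
  have h2 : {ω : PercSpace d M | ∀ w ∈ S, ω w = if h : w ∈ S then b ⟨w, h⟩ else true} =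
      (fun ω (i : S) => S.restrict (fun (w : Word d M) (ω : PercSpace d M) => ω w) i ω) ⁻¹' {b} := by
    ext ω
    simp only [Set.mem_ofPred_eq, Set.mem_preimage, Set.mem_singleton_iff, funext_iff,
      Finset.restrict]
    constructor
    · intro h i
      have := h i.1 i.2
      rwa [dif_pos i.2] at this
    · intro h w hw
      rw [dif_pos hw]
      exact h ⟨w, hw⟩
  rw [← h2, h1, ← Finset.prod_coe_sort]
  refine Finset.prod_congr rfl fun i _ => ?_
  rw [Measure.map_apply (hmeas i) (measurableSet_singleton _), dif_pos i.2]
  exact (hone i.1 (b i)).symm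

lemma hoeff {ι : Type*} (P : Measure (ι → Bool)) [IsProbabilityMeasure P]
    (hind : iIndepFun (fun (i : ι) (ω : ι → Bool) => ω i) P) (p u K R : ℝ)
    (hp0 : 0 < p) (hu : 1 < u) (hK : 0 < K) (hR : 0 < R)
    (hmean : ∀ i, P {ω | ω i = true} = ENNReal.ofReal p)
    (a : ι → ℝ) (ha0 : ∀ i, 0 ≤ a i) (T : Finset ι) (haK : ∀ i ∈ T, a i ≤ K)
    (hRA : R ≤ ∑ i ∈ T, a i) :
    P {ω | p * u * ∑ i ∈ T, a i < ∑ i ∈ T with ω i = true, a i} ≤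
      ENNReal.ofReal (Real.exp (-(2 * (p ^ 2 * (u - 1) ^ 2) * R / K))) := by
  set A := ∑ i ∈ T, a i with hA
  have hApos : 0 < A := hR.trans_le hRA
  let g : ι → Bool → ℝ := fun i b => if b = true then a i else 0
  have hgm : ∀ i, Measurable (g i) := fun i => measurable_of_finite _
  let X : ι → (ι → Bool) → ℝ := fun i ω => g i (ω i)
  have hXm : ∀ i, Measurable (X i) := fun i => (hgm i).comp (measurable_pi_apply i)
  have hXE : ∀ i, ∫ ω, X i ω ∂P = p * a i := by
    intro i
    have hm : MeasurableSet {ω : ι → Bool | ω i = true} :=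
      measurableSet_eq_fun (measurable_pi_apply i) measurable_const
    have : X i = Set.indicator {ω : ι → Bool | ω i = true} (fun _ => a i) := by
      ext ω
      simp [X, g, Set.indicator_apply]
    rw [this, integral_indicator_const _ hm, Measure.real, hmean, ENNReal.toReal_ofReal hp0.le,
      smul_eq_mul]
  have hsub : ∀ i ∈ T, HasSubgaussianMGF (fun ω => X i ω - p * a i) ((‖a i - 0‖₊ / 2) ^ 2) P := by
    intro i _
    have := hasSubgaussianMGF_of_mem_Icc (μ := P) (X := X i) (a := 0) (b := a i)
      (hXm i).aemeasurable (Filter.Eventually.of_forall fun ω => by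
        simp only [X, g]
        split_ifs
        · exact ⟨ha0 i, le_refl _⟩
        · exact ⟨le_refl _, ha0 i⟩)
    rwa [hXE] at this
  have hind2 : iIndepFun (fun i ω => X i ω - p * a i) P :=
    hind.comp (fun i b => g i b - p * a i) (fun i => (hgm i).sub_const _)
  have key := HasSubgaussianMGF.measure_sum_ge_le_of_iIndepFun hind2 hsub
    (ε := p * (u - 1) * A) (by have : 0 < u - 1 := by linarith
                               positivity)
  have hmono : {ω : ι → Bool | p * u * A < ∑ i ∈ T with ω i = true, a i} ⊆
      {ω | p * (u - 1) * A ≤ ∑ i ∈ T, (X i ω - p * a i)} := by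
    intro ω hω
    simp only [Set.mem_ofPred_eq] at hω ⊢
    rw [Finset.sum_sub_distrib, ← Finset.mul_sum, ← hA]
    rw [Finset.sum_filter] at hω
    simp only [X, g]
    linarith
  refine (measure_mono hmono).trans ?_
  rw [← ENNReal.ofReal_toReal (measure_ne_top P {ω | p * (u - 1) * A ≤ ∑ i ∈ T, (X i ω - p * a i)})]
  refine ENNReal.ofReal_le_ofReal (key.trans (Real.exp_le_exp.2 ?_))
  have e : ((∑ i ∈ T, ((‖a i - 0‖₊ / 2) ^ 2 : NNReal) : NNReal) : ℝ) = (∑ i ∈ T, a i ^ 2) / 4 := by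
    push_cast
    rw [Finset.sum_div]
    refine Finset.sum_congr rfl fun i _ => ?_
    simp only [sub_zero, Real.norm_eq_abs, div_pow, sq_abs]
    norm_num
  push_cast at e
  push_cast
  rw [e]
  set B := ∑ i ∈ T, a i ^ 2 with hB
  have hBle : B ≤ K * A := by
    rw [hA, hB, Finset.mul_sum]
    refine Finset.sum_le_sum fun i hi => ?_
    nlinarith [ha0 i, haK i hi]
  have hBpos : 0 < B := by
    obtain ⟨i, hi, hne⟩ := Finset.exists_ne_zero_of_sum_ne_zero hApos.ne'
    exact Finset.sum_pos' (fun i _ => sq_nonneg _) ⟨i, hi, by positivity⟩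
  rw [neg_div, neg_le_neg_iff, div_le_div_iff₀ hK (by positivity)]
  have hc : 0 ≤ p ^ 2 * (u - 1) ^ 2 := by positivity
  have h1 : R * B ≤ A ^ 2 * K := by
    calc R * B ≤ A * (K * A) := mul_le_mul hRA hBle hBpos.le hApos.le
      _ = A ^ 2 * K := by ring
  calc 2 * (p ^ 2 * (u - 1) ^ 2) * R * (2 * (B / 4)) = (p ^ 2 * (u - 1) ^ 2) * (R * B) := by ring
    _ ≤ (p ^ 2 * (u - 1) ^ 2) * (A ^ 2 * K) := mul_le_mul_of_nonneg_left h1 hc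
    _ = (p * (u - 1) * A) ^ 2 * K := by ring

lemma prob_core {ι : Type*} (P : Measure (ι → Bool)) [IsProbabilityMeasure P]
    (hind : iIndepFun (fun (i : ι) (ω : ι → Bool) => ω i) P) (p u K R : ℝ)
    (hp0 : 0 < p) (hu : 1 < u) (hK : 0 < K) (hR : 0 < R)
    (hmean : ∀ i, P {ω | ω i = true} = ENNReal.ofReal p)
    (a : ι → ℝ) (ha0 : ∀ i, 0 ≤ a i) (F G : Finset ι) (hFG : Disjoint F G)
    (haK : ∀ i ∈ G, a i ≤ K)
    (Sel : (ι → Bool) → Finset ι) (hSel : ∀ ω, Sel ω ⊆ G)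
    (hdep : ∀ ω ω', (∀ i ∈ F, ω i = ω' i) → Sel ω = Sel ω') :
    MeasurableSet {ω | R ≤ ∑ i ∈ Sel ω, a i} ∧
    P ({ω | R ≤ ∑ i ∈ Sel ω, a i} ∩
        {ω | p * u * ∑ i ∈ Sel ω, a i < ∑ i ∈ Sel ω with ω i = true, a i}) ≤
      ENNReal.ofReal (Real.exp (-(2 * (p ^ 2 * (u - 1) ^ 2) * R / K))) *
        P {ω | R ≤ ∑ i ∈ Sel ω, a i} := by
  classical
  set s := {ω | R ≤ ∑ i ∈ Sel ω, a i} with hs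
  set t := {ω | p * u * ∑ i ∈ Sel ω, a i < ∑ i ∈ Sel ω with ω i = true, a i} with ht
  set q := ENNReal.ofReal (Real.exp (-(2 * (p ^ 2 * (u - 1) ^ 2) * R / K))) with hq
  let ext : (F → Bool) → (ι → Bool) := fun b i => if h : i ∈ F then b ⟨i, h⟩ else true
  let res : (ι → Bool) → (F → Bool) := fun ω i => ω i
  have hres : Measurable res := measurable_pi_iff.2 fun i => measurable_pi_apply _
  have hselres : ∀ ω, Sel (ext (res ω)) = Sel ω := by
    intro ω
    apply hdep
    intro i hi
    simp [ext, res, hi]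
  let good : Finset (F → Bool) := Finset.univ.filter (fun b => R ≤ ∑ i ∈ Sel (ext b), a i)
  have hsU : s = ⋃ b ∈ good, res ⁻¹' {b} := by
    ext ω
    simp [hs, good, hselres]
  have hpm : ∀ b, MeasurableSet (res ⁻¹' {b}) := fun b => hres (measurableSet_singleton b)
  have hsm : MeasurableSet s := by
    rw [hsU]
    exact Finset.measurableSet_biUnion _ fun b _ => hpm b
  refine ⟨hsm, ?_⟩
  have hPs : P s = ∑ b ∈ good, P (res ⁻¹' {b}) := by
    rw [hsU, measure_biUnion_finset _ fun b _ => hpm b]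
    intro b _ b' _ hne
    exact Disjoint.preimage _ (Set.disjoint_singleton.2 hne)
  have hst : s ∩ t = ⋃ b ∈ good, (res ⁻¹' {b} ∩ t) := by
    rw [hsU, Set.iUnion₂_inter]
  rw [hst, hPs, Finset.mul_sum]
  refine (measure_biUnion_finset_le _ _).trans (Finset.sum_le_sum fun b hb => ?_)
  have hbR : R ≤ ∑ i ∈ Sel (ext b), a i := by simpa [good] using hb
  set T := Sel (ext b) with hT
  have hindFG := hind.indepFun_finset F G hFG (fun i => measurable_pi_apply i)
  let V : Set (G → Bool) :=
    {η | p * u * ∑ i ∈ T, a i < ∑ i ∈ T with (if h : i ∈ G then η ⟨i, h⟩ else true) = true, a i}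
  have hV : {ω : ι → Bool | p * u * ∑ i ∈ T, a i < ∑ i ∈ T with ω i = true, a i} =
      (fun ω (i : G) => ω i) ⁻¹' V := by
    ext ω
    simp only [V, Set.mem_ofPred_eq, Set.mem_preimage]
    have : T.filter (fun i => ω i = true) =
        T.filter (fun i => (if h : i ∈ G then ω i else true) = true) := by
      refine Finset.filter_congr fun i hi => ?_
      simp [hSel _ hi]
    rw [this]
  have hsub : res ⁻¹' {b} ∩ t ⊆ res ⁻¹' {b} ∩ (fun ω (i : G) => ω i) ⁻¹' V := by
    rintro ω ⟨h1, h2⟩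
    refine ⟨h1, ?_⟩
    rw [← hV]
    have : Sel ω = T := by
      rw [hT, ← (show res ω = b from h1), hselres]
    simp only [ht, Set.mem_ofPred_eq, this] at h2
    exact h2
  refine (measure_mono hsub).trans ?_
  have := hindFG.measure_inter_preimage_eq_mul {b} V (measurableSet_singleton b)
    (Set.toFinite V).measurableSet
  refine this.le.trans ?_
  rw [mul_comm, ← hV]
  gcongr
  exact hoeff P hind p u K R hp0 hu hK hR hmean a ha0 T (fun i hi => haK i (hSel _ hi)) hbR

/-- large-deviation estimate for the slice lengths: for every
`u > 1` there is `r > 0` such that for all `n ≥ 1`, `ℓ ∈ 𝔏` and `0 < R < |ℓ|`,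
`ℙ(L_n(ℓ) > p u L_{n-1}(ℓ) ∣ L_{n-1}(ℓ) ≥ R) < exp(-r M^{n-1} R)`. -/
theorem slice_large_deviation
    (M : ℕ) (hM : 2 ≤ M) (p : ℝ) (hp0 : 0 < p) (hp1 : p < 1)
    (P : Measure (PercSpace 2 M)) (hP : IsBernoulliPerc 2 M p P)
    (u : ℝ) (hu : 1 < u) :
    ∃ r : ℝ, 0 < r ∧
      ∀ n : ℕ, 1 ≤ n → ∀ z v : EuclideanSpace ℝ (Fin 2),
        v 0 ≠ 0 → v 1 ≠ 0 → MeetsOpenSquare z v →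
      ∀ R : ℝ, 0 < R → ENNReal.ofReal R < μH[1] (lineSeg z v) →
        ProbabilityTheory.cond P
            {ω | ENNReal.ofReal R ≤ μH[1] (approx 2 M ω (n - 1) ∩ lineSeg z v)}
            {ω | ENNReal.ofReal (p * u) * μH[1] (approx 2 M ω (n - 1) ∩ lineSeg z v) <
                  μH[1] (approx 2 M ω n ∩ lineSeg z v)} <
          ENNReal.ofReal (Real.exp (-(r * (M : ℝ) ^ ((n : ℤ) - 1) * R))) := by
  classical
  have hMpos : 0 < M := by omega
  have hM' : (0 : ℝ) < M := by positivity
  have hM1 : (1 : ℝ) < M := by exact_mod_cast hM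
  obtain ⟨hmean, hind⟩ := perc_map_restrict 2 M p hp0 hp1 P hP
  have hprob := hP.1
  have hu1 : 0 < u - 1 := by linarith
  refine ⟨p ^ 2 * (u - 1) ^ 2, by positivity, ?_⟩
  intro n hn z v hv0 hv1 _ R hR _
  let a : Word 2 M → ℝ := fun w => (μH[1] (wordCube 2 M w.1 ∩ lineSeg z v)).toReal
  have ha0 : ∀ w, 0 ≤ a w := fun w => ENNReal.toReal_nonneg
  set K := 2 * (M : ℝ) ^ (-(n : ℤ)) with hK
  have hKpos : 0 < K := by positivity
  have haK : ∀ w ∈ lev 2 M n, a w ≤ K := by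
    intro w hw
    have := slice_le M hMpos z v hv0 hv1 w.1
    rw [(mem_lev 2 M n w).1 hw] at this
    exact ENNReal.toReal_le_of_le_ofReal hKpos.le this
  have hsl : ∀ ω, selW 2 M n ω ⊆ lev 2 M n := fun ω => Finset.filter_subset _ _
  have hL0 : ∀ ω, μH[1] (approx 2 M ω (n - 1) ∩ lineSeg z v) =
      ENNReal.ofReal (∑ w ∈ selW 2 M n ω, a w) := by
    intro ω
    rw [approx_pred_eq 2 M n hMpos hn, slice_add M hMpos z v hv0 hv1 n]
    exact fun w hw => (mem_lev 2 M n w).1 (hsl ω hw)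
  have hL1 : ∀ ω, μH[1] (approx 2 M ω n ∩ lineSeg z v) =
      ENNReal.ofReal (∑ w ∈ selW 2 M n ω with ω w = true, a w) := by
    intro ω
    rw [approx_eq 2 M n hn, slice_add M hMpos z v hv0 hv1 n]
    exact fun w hw => (mem_lev 2 M n w).1 (hsl ω (Finset.mem_filter.1 hw).1)
  have hdisj : Disjoint (past 2 M n) (lev 2 M n) := by
    rw [Finset.disjoint_left]
    intro w h1 h2
    rw [mem_past] at h1
    rw [mem_lev] at h2
    omega
  have hdep : ∀ ω ω' : PercSpace 2 M, (∀ w ∈ past 2 M n, ω w = ω' w) →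
      selW 2 M n ω = selW 2 M n ω' := by
    intro ω ω' h
    refine Finset.filter_congr fun w hw => ?_
    refine forall_congr' fun x => forall_congr' fun hx => forall_congr' fun hpre => ?_
    rw [h]
    rw [mem_past]
    rw [mem_lev] at hw
    have := hpre.length_le
    rw [List.length_dropLast] at this
    simp only
    omega
  obtain ⟨hms, hle⟩ := prob_core P hind p u K R hp0 hu hKpos hR hmean a ha0 (past 2 M n)
    (lev 2 M n) hdisj haK (selW 2 M n) hsl hdep
  have hS : {ω | ENNReal.ofReal R ≤ μH[1] (approx 2 M ω (n - 1) ∩ lineSeg z v)} =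
      {ω | R ≤ ∑ w ∈ selW 2 M n ω, a w} := by
    ext ω
    simp only [Set.mem_ofPred_eq, hL0]
    exact ENNReal.ofReal_le_ofReal_iff (Finset.sum_nonneg fun w _ => ha0 w)
  have hT : {ω | ENNReal.ofReal (p * u) * μH[1] (approx 2 M ω (n - 1) ∩ lineSeg z v) <
      μH[1] (approx 2 M ω n ∩ lineSeg z v)} =
      {ω | p * u * ∑ w ∈ selW 2 M n ω, a w < ∑ w ∈ selW 2 M n ω with ω w = true, a w} := by
    ext ω
    simp only [Set.mem_ofPred_eq, hL0, hL1]
    rw [← ENNReal.ofReal_mul (by positivity)]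
    exact ENNReal.ofReal_lt_ofReal_iff_of_nonneg
      (mul_nonneg (by positivity) (Finset.sum_nonneg fun w _ => ha0 w))
  rw [hS, hT, cond_apply hms]
  set s := {ω | R ≤ ∑ w ∈ selW 2 M n ω, a w} with hs
  by_cases h0 : P s = 0
  · rw [measure_mono_null Set.inter_subset_left h0, mul_zero]
    exact ENNReal.ofReal_pos.2 (Real.exp_pos _)
  · refine lt_of_le_of_lt (mul_le_mul_right hle _) ?_
    rw [mul_comm, mul_assoc, ENNReal.mul_inv_cancel h0 (measure_ne_top P s), mul_one]
    refine (ENNReal.ofReal_lt_ofReal_iff (Real.exp_pos _)).2 (Real.exp_lt_exp.2 ?_)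
    have e1 : 2 * (p ^ 2 * (u - 1) ^ 2) * R / K =
        (p ^ 2 * (u - 1) ^ 2) * R * (M : ℝ) ^ ((n : ℤ) - 1) * M := by
      rw [hK, zpow_neg, zpow_sub_one₀ hM'.ne']
      field_simp
    rw [e1, neg_lt_neg_iff]
    have hc : 0 < (p ^ 2 * (u - 1) ^ 2) * R * (M : ℝ) ^ ((n : ℤ) - 1) := by positivity
    nlinarith
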